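/- arXiv:2404.00561 — 5 statements merged into one kernel-verified Lean document; each statement's English description precedes it below -/
import Mathlib

section
/- Let ξ be the odd endomorphism of V = V⁺ × V⁻ with components X and Y, and W_i = ker(ξ^i), with graded pieces W_i⁺ and W_i⁻. For every i ≥ 1, ξ induces an injective F-linear map W_{i+1}⁺/W_i⁺ → W_i⁻/W_{i−1}⁻ and an injective F-linear map W_{i+1}⁻/W_i⁻ → W_i⁺/W_{i−1}⁺; consequently the successive kernel increments satisfy finrank W_{i+1}⁺ − finrank W_i⁺ ≤ finrank W_i⁻ − finrank W_{i−1}⁻ and finrank W_{i+1}⁻ − finrank W_i⁻ ≤ finrank W_i⁺ − finrank W_{i−1}⁺ (i.e., r_i^± ≥ r_{i+1}^∓ in the notation of the paper). -/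
/-!
An odd endomorphism `ξ` exchanges the even and the odd part of `V⁺ × V⁻`, and `ξ^(i+1) v = ξ^i (ξ v)`.
So for even `v` and every `j`, `v ∈ W_{j+1}⁺` if and only if `ξ v ∈ W_j⁻`, and symmetrically for odd
`v` (`oddEnd_mem_odd_iff`, `oddEnd_mem_even_iff`). With `j = i` this says that `ξ` maps `W_{i+1}⁺`
into `W_i⁻`; with `j = i - 1` it says that the preimage of `W_{i-1}⁻` in `W_{i+1}⁺` is exactly `W_i⁺`.
Hence `ξ` descends to an injection of quotients (`exists_injective_quotient_map`), and comparing
dimensions gives the inequalities (`finrank_sub_le_of_injective`).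
-/

/-- The odd endomorphism of `V⁺ × V⁻` with components `X : V⁺ → V⁻` and `Y : V⁻ → V⁺`,
given by `ξ(v⁺, v⁻) = (Y v⁻, X v⁺)`. -/
def oddEnd {F Vp Vm : Type*} [Field F] [AddCommGroup Vp] [Module F Vp]
    [AddCommGroup Vm] [Module F Vm] (X : Vp →ₗ[F] Vm) (Y : Vm →ₗ[F] Vp) :
    Module.End F (Vp × Vm) :=
  LinearMap.prod (Y ∘ₗ LinearMap.snd F Vp Vm) (X ∘ₗ LinearMap.fst F Vp Vm)

/-- A linear map sending `A` into `B`, for which the preimage of `B'` in `A` is `A ∩ A'`, induces an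
injection of `A / (A ∩ A')` into `B / (B ∩ B')`. -/
theorem exists_injective_quotient_map {F V : Type*} [Field F] [AddCommGroup V] [Module F V]
    (ξ : Module.End F V) (A A' B B' : Submodule F V) (hAB : ∀ v ∈ A, ξ v ∈ B)
    (h : ∀ v ∈ A, ξ v ∈ B' ↔ v ∈ A') :
    ∃ f : (A ⧸ Submodule.comap A.subtype A') →ₗ[F] (B ⧸ Submodule.comap B.subtype B'),
      Function.Injective f ∧ ∀ (v : A) (w : B), (w : V) = ξ (v : V) →
        f (Submodule.Quotient.mk v) = Submodule.Quotient.mk w := by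
  have hcomap : Submodule.comap A.subtype A' =
      (Submodule.comap B.subtype B').comap (ξ.restrict hAB) := by
    ext v
    exact (h v v.2).symm
  refine ⟨Submodule.mapQ _ _ (ξ.restrict hAB) hcomap.le, ?_, ?_⟩
  · rw [← LinearMap.ker_eq_bot, Submodule.ker_mapQ, ← hcomap, Submodule.mkQ_map_self]
  · intro v w hw
    rw [Submodule.mapQ_apply]
    congr 1
    exact Subtype.ext hw.symm

theorem finrank_sub_le_of_injective {F V : Type*} [Field F] [AddCommGroup V] [Module F V]
    [FiniteDimensional F V] {A A' B B' : Submodule F V} (hA : A' ≤ A) (hB : B' ≤ B)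
    (f : (A ⧸ Submodule.comap A.subtype A') →ₗ[F] (B ⧸ Submodule.comap B.subtype B'))
    (hf : Function.Injective f) :
    Module.finrank F A - Module.finrank F A' ≤ Module.finrank F B - Module.finrank F B' := by
  have h := LinearMap.finrank_le_finrank_of_injective hf
  rwa [Submodule.finrank_quotient, Submodule.finrank_quotient,
    (Submodule.comapSubtypeEquivOfLe hA).finrank_eq,
    (Submodule.comapSubtypeEquivOfLe hB).finrank_eq] at h

theorem oddEnd_mem_odd_iff {F Vp Vm : Type*} [Field F] [AddCommGroup Vp] [Module F Vp]
    [AddCommGroup Vm] [Module F Vm] (X : Vp →ₗ[F] Vm) (Y : Vm →ₗ[F] Vp) (j : ℕ) {v : Vp × Vm}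
    (hv : v ∈ Submodule.prod (⊤ : Submodule F Vp) (⊥ : Submodule F Vm)) :
    oddEnd X Y v ∈ LinearMap.ker (oddEnd X Y ^ j) ⊓
        Submodule.prod (⊥ : Submodule F Vp) (⊤ : Submodule F Vm) ↔
      v ∈ LinearMap.ker (oddEnd X Y ^ (j + 1)) ⊓
        Submodule.prod (⊤ : Submodule F Vp) (⊥ : Submodule F Vm) := by
  have hv2 : v.2 = 0 := by simpa [Submodule.mem_prod] using hv
  have hodd : oddEnd X Y v ∈ Submodule.prod (⊥ : Submodule F Vp) (⊤ : Submodule F Vm) := by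
    simp [Submodule.mem_prod, oddEnd, hv2]
  simp only [Submodule.mem_inf, hv, hodd, and_true, LinearMap.mem_ker, pow_succ, Module.End.mul_apply]

theorem oddEnd_mem_even_iff {F Vp Vm : Type*} [Field F] [AddCommGroup Vp] [Module F Vp]
    [AddCommGroup Vm] [Module F Vm] (X : Vp →ₗ[F] Vm) (Y : Vm →ₗ[F] Vp) (j : ℕ) {v : Vp × Vm}
    (hv : v ∈ Submodule.prod (⊥ : Submodule F Vp) (⊤ : Submodule F Vm)) :
    oddEnd X Y v ∈ LinearMap.ker (oddEnd X Y ^ j) ⊓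
        Submodule.prod (⊤ : Submodule F Vp) (⊥ : Submodule F Vm) ↔
      v ∈ LinearMap.ker (oddEnd X Y ^ (j + 1)) ⊓
        Submodule.prod (⊥ : Submodule F Vp) (⊤ : Submodule F Vm) := by
  have hv1 : v.1 = 0 := by simpa [Submodule.mem_prod] using hv
  have heven : oddEnd X Y v ∈ Submodule.prod (⊤ : Submodule F Vp) (⊥ : Submodule F Vm) := by
    simp [Submodule.mem_prod, oddEnd, hv1]
  simp only [Submodule.mem_inf, hv, heven, and_true, LinearMap.mem_ker, pow_succ, Module.End.mul_apply]

/-- For each `i ≥ 1`, `ξ` induces injective linear maps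
`W_{i+1}⁺/W_i⁺ → W_i⁻/W_{i-1}⁻` and `W_{i+1}⁻/W_i⁻ → W_i⁺/W_{i-1}⁺`; consequently
the successive kernel increments satisfy `r_i^± ≥ r_{i+1}^∓`. -/
theorem oddEnd_graded_kernel_increments {F Vp Vm : Type*} [Field F]
    [AddCommGroup Vp] [Module F Vp] [FiniteDimensional F Vp]
    [AddCommGroup Vm] [Module F Vm] [FiniteDimensional F Vm]
    (X : Vp →ₗ[F] Vm) (Y : Vm →ₗ[F] Vp)
    (ξ : Module.End F (Vp × Vm)) (hξ : ξ = oddEnd X Y)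
    (Wp Wm : ℕ → Submodule F (Vp × Vm))
    (hWp : ∀ i, Wp i = LinearMap.ker (ξ ^ i) ⊓
        Submodule.prod (⊤ : Submodule F Vp) (⊥ : Submodule F Vm))
    (hWm : ∀ i, Wm i = LinearMap.ker (ξ ^ i) ⊓
        Submodule.prod (⊥ : Submodule F Vp) (⊤ : Submodule F Vm)) :
    ∀ i : ℕ, 1 ≤ i →
      (∀ v ∈ Wp (i + 1), ξ v ∈ Wm i) ∧
      (∀ v ∈ Wp (i + 1), ξ v ∈ Wm (i - 1) → v ∈ Wp i) ∧
      (∃ f : ((Wp (i + 1)) ⧸ Submodule.comap (Wp (i + 1)).subtype (Wp i)) →ₗ[F]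
            ((Wm i) ⧸ Submodule.comap (Wm i).subtype (Wm (i - 1))),
        Function.Injective f ∧
          ∀ (v : Wp (i + 1)) (w : Wm i), (w : Vp × Vm) = ξ (v : Vp × Vm) →
            f (Submodule.Quotient.mk v) = Submodule.Quotient.mk w) ∧
      (∀ v ∈ Wm (i + 1), ξ v ∈ Wp i) ∧
      (∀ v ∈ Wm (i + 1), ξ v ∈ Wp (i - 1) → v ∈ Wm i) ∧
      (∃ g : ((Wm (i + 1)) ⧸ Submodule.comap (Wm (i + 1)).subtype (Wm i)) →ₗ[F]
            ((Wp i) ⧸ Submodule.comap (Wp i).subtype (Wp (i - 1))),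
        Function.Injective g ∧
          ∀ (v : Wm (i + 1)) (w : Wp i), (w : Vp × Vm) = ξ (v : Vp × Vm) →
            g (Submodule.Quotient.mk v) = Submodule.Quotient.mk w) ∧
      Module.finrank F (Wp (i + 1)) - Module.finrank F (Wp i) ≤
        Module.finrank F (Wm i) - Module.finrank F (Wm (i - 1)) ∧
      Module.finrank F (Wm (i + 1)) - Module.finrank F (Wm i) ≤
        Module.finrank F (Wp i) - Module.finrank F (Wp (i - 1)) := by
  subst hξ
  intro i hi
  -- Writing `i = k + 1` replaces the truncated subtraction `i - 1` by `k`.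
  obtain ⟨k, rfl⟩ : ∃ k, i = k + 1 := ⟨i - 1, by omega⟩
  simp only [Nat.add_sub_cancel]
  have hp : ∀ n j, ∀ v ∈ Wp n, oddEnd X Y v ∈ Wm j ↔ v ∈ Wp (j + 1) := by
    intro n j v hv
    rw [hWp] at hv
    rw [hWp, hWm]
    exact oddEnd_mem_odd_iff X Y j hv.2
  have hm : ∀ n j, ∀ v ∈ Wm n, oddEnd X Y v ∈ Wp j ↔ v ∈ Wm (j + 1) := by
    intro n j v hv
    rw [hWm] at hv
    rw [hWp, hWm]
    exact oddEnd_mem_even_iff X Y j hv.2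
  have hker : ∀ j, LinearMap.ker (oddEnd X Y ^ j) ≤ LinearMap.ker (oddEnd X Y ^ (j + 1)) := by
    intro j
    rw [pow_succ', Module.End.mul_eq_comp]
    exact LinearMap.ker_le_ker_comp _ _
  have hpmono : ∀ j, Wp j ≤ Wp (j + 1) := fun j => by
    rw [hWp, hWp]
    exact inf_le_inf_right _ (hker j)
  have hmmono : ∀ j, Wm j ≤ Wm (j + 1) := fun j => by
    rw [hWm, hWm]
    exact inf_le_inf_right _ (hker j)
  have hpm : ∀ v ∈ Wp (k + 1 + 1), oddEnd X Y v ∈ Wm (k + 1) := fun v hv => (hp _ _ v hv).2 hv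
  have hmp : ∀ v ∈ Wm (k + 1 + 1), oddEnd X Y v ∈ Wp (k + 1) := fun v hv => (hm _ _ v hv).2 hv
  obtain ⟨f, hf, hfmk⟩ := exists_injective_quotient_map (oddEnd X Y) _ _ _ _ hpm (hp _ k)
  obtain ⟨g, hg, hgmk⟩ := exists_injective_quotient_map (oddEnd X Y) _ _ _ _ hmp (hm _ k)
  exact ⟨hpm, fun v hv => (hp _ k v hv).1, ⟨f, hf, hfmk⟩, hmp, fun v hv => (hm _ k v hv).1,
    ⟨g, hg, hgmk⟩, finrank_sub_le_of_injective (hpmono _) (hmmono _) f hf,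
    finrank_sub_le_of_injective (hmmono _) (hpmono _) g hg⟩
end

section
/- Classification of nilpotent orbits in the sliced representation: let X, X′ : V⁺ → V⁻ and Y, Y′ : V⁻ → V⁺ be F-linear maps such that the odd endomorphisms ξ (with components X, Y) and ξ′ (with components X′, Y′) of V = V⁺ × V⁻ are both nilpotent. Then there exist F-linear automorphisms g ∈ GL(V⁺) and h ∈ GL(V⁻) with X′ = h ∘ X ∘ g⁻¹ and Y′ = g ∘ Y ∘ h⁻¹ if and only if for every i ≥ 0 one has finrank(ker(ξ^i) ∩ (V⁺ × {0})) = finrank(ker(ξ′^i) ∩ (V⁺ × {0})) and finrank(ker(ξ^i) ∩ ({0} × V⁻)) = finrank(ker(ξ′^i) ∩ ({0} × V⁻)). -/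
/-! ### Extending isomorphisms of subspaces -/

theorem finrank_ker_comp_eq {F A B C : Type*} [Field F] [AddCommGroup A] [Module F A]
    [FiniteDimensional F A] [AddCommGroup B] [Module F B] [AddCommGroup C] [Module F C]
    (X : A →ₗ[F] B) (T : B →ₗ[F] C) :
    Module.finrank F (LinearMap.ker (T ∘ₗ X)) = Module.finrank F (LinearMap.ker X) +
      Module.finrank F (LinearMap.ker (T ∘ₗ (LinearMap.range X).subtype)) := by
  have h1 := (T ∘ₗ X).finrank_range_add_finrank_ker
  have h2 := X.finrank_range_add_finrank_ker
  have h3 := (T ∘ₗ (LinearMap.range X).subtype).finrank_range_add_finrank_ker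
  have h4 : LinearMap.range (T ∘ₗ (LinearMap.range X).subtype) = LinearMap.range (T ∘ₗ X) := by
    rw [LinearMap.range_comp, LinearMap.range_comp, Submodule.range_subtype]
  rw [h4] at h3
  omega

/-- An injective linear map on a subspace extends to an injective linear map (hence an
isomorphism) of the whole space, if source and target have the same finite dimension. -/
theorem exists_injective_extending {F N N' : Type*} [Field F]
    [AddCommGroup N] [Module F N] [FiniteDimensional F N]
    [AddCommGroup N'] [Module F N'] [FiniteDimensional F N']
    (hd : Module.finrank F N = Module.finrank F N')
    (U : Submodule F N) (T : U →ₗ[F] N') (hT : Function.Injective T) :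
    ∃ k : N →ₗ[F] N', Function.Injective k ∧ ∀ u : U, k u = T u := by
  obtain ⟨C, hC⟩ := Submodule.exists_isCompl U
  obtain ⟨C', hC'⟩ := Submodule.exists_isCompl (LinearMap.range T)
  have h1 := Submodule.finrank_add_eq_of_isCompl hC
  have h2 := Submodule.finrank_add_eq_of_isCompl hC'
  have h3 := LinearMap.finrank_range_of_inj hT
  let c : C ≃ₗ[F] C' := LinearEquiv.ofFinrankEq _ _ (by omega)
  let e := ((LinearEquiv.ofInjective T hT).prodCongr c)
  let k := (Submodule.prodEquivOfIsCompl U C hC).symm ≪≫ₗ e ≪≫ₗ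
    Submodule.prodEquivOfIsCompl _ C' hC'
  refine ⟨k.toLinearMap, k.injective, fun u => ?_⟩
  simp [k, e]

/-- The extension step. Given an isomorphism `h` between the images of `f` and `f'` and an
isomorphism `e` between subspaces `S` and `S'` compatible with it, `e` extends to an isomorphism
of the full source spaces that lifts `h`, provided the kernels have the same dimension. A lift
of `h` is injective as soon as it is injective on `ker f`, so it suffices to extend `e` from
`S ∩ ker f` to an isomorphism `ker f → ker f'` before lifting on the rest. -/
theorem exists_equiv_extending_over {F A B A' B' : Type*} [Field F]
    [AddCommGroup A] [Module F A] [FiniteDimensional F A] [AddCommGroup B] [Module F B]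
    [AddCommGroup A'] [Module F A'] [FiniteDimensional F A'] [AddCommGroup B'] [Module F B']
    (f : A →ₗ[F] B) (f' : A' →ₗ[F] B') (S : Submodule F A) (S' : Submodule F A')
    (e : S ≃ₗ[F] S') (h : LinearMap.range f ≃ₗ[F] LinearMap.range f')
    (hcomm : ∀ s : S, f' (e s) = h (f.rangeRestrict s))
    (hker : Module.finrank F (LinearMap.ker f) = Module.finrank F (LinearMap.ker f')) :
    ∃ g : A ≃ₗ[F] A', (∀ s : S, g s = e s) ∧ ∀ a, f' (g a) = h (f.rangeRestrict a) := by
  have hinker : ∀ s : S, (s : A) ∈ LinearMap.ker f → ((e s : S') : A') ∈ LinearMap.ker f' := by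
    intro s hs
    rw [LinearMap.mem_ker, hcomm]
    have : f.rangeRestrict s = 0 := Subtype.ext hs
    simp [this]
  -- the restriction of `e` to `S ∩ ker f`, extended to an isomorphism `ker f → ker f'`
  let U : Submodule F (LinearMap.ker f) := S.comap (LinearMap.ker f).subtype
  let T : U →ₗ[F] LinearMap.ker f' :=
    (S'.subtype ∘ₗ e.toLinearMap ∘ₗ
      ((LinearMap.ker f).subtype ∘ₗ U.subtype).codRestrict S (fun u => u.2)).codRestrict _
      (fun u => hinker ⟨u.1.1, u.2⟩ u.1.2)
  have hTapp : ∀ u : U, ((T u : LinearMap.ker f') : A') = e ⟨u.1.1, u.2⟩ := fun u => rfl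
  have hT : Function.Injective T := by
    intro u v huv
    have h1 : ((T u : LinearMap.ker f') : A') = T v := congrArg _ huv
    rw [hTapp, hTapp] at h1
    have h2 := e.injective (Subtype.ext h1)
    exact Subtype.ext (Subtype.ext (Subtype.mk.inj h2))
  obtain ⟨k, hkinj, hk⟩ := exists_injective_extending hker U T hT
  -- `ψ` is any lift of `h ∘ f` through `f'`
  obtain ⟨σ, hσ⟩ := f'.rangeRestrict.exists_rightInverse_of_surjective f'.range_rangeRestrict
  let ψ : A →ₗ[F] A' := σ ∘ₗ h.toLinearMap ∘ₗ f.rangeRestrict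
  have hψ : ∀ a, f' (ψ a) = h (f.rangeRestrict a) := fun a =>
    congrArg Subtype.val (LinearMap.congr_fun hσ (h (f.rangeRestrict a)))
  -- glue `e` and `k` on `S + ker f`
  let p : A →ₗ.[F] A' := ⟨S, S'.subtype ∘ₗ e.toLinearMap⟩
  let q : A →ₗ.[F] A' := ⟨LinearMap.ker f, (LinearMap.ker f').subtype ∘ₗ k⟩
  have hpq : ∀ (x : p.domain) (y : q.domain), (x : A) = y → p x = q y := by
    rintro ⟨x, hx⟩ ⟨y, hy⟩ hxy
    obtain rfl : x = y := hxy
    exact (congrArg Subtype.val (hk ⟨⟨x, hy⟩, hx⟩)).symm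
  let m := p.sup q hpq
  have hmp : p ≤ m := p.left_le_sup q hpq
  have hmq : q ≤ m := p.right_le_sup q hpq
  have hmker : ∀ x : m.domain, f' (m x) = h (f.rangeRestrict x) := by
    rintro ⟨x, hx⟩
    obtain ⟨s, hs, n, hn, rfl⟩ := Submodule.mem_sup.1 hx
    have e1 : m ⟨s + n, hx⟩ = p ⟨s, hs⟩ + q ⟨n, hn⟩ := p.sup_apply hpq ⟨s, hs⟩ ⟨n, hn⟩ ⟨_, hx⟩ rfl
    have e2 : f' (p ⟨s, hs⟩) = h (f.rangeRestrict s) := hcomm ⟨s, hs⟩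
    have e3 : f' (q ⟨n, hn⟩) = 0 := (k ⟨n, hn⟩).2
    have e4 : f.rangeRestrict n = 0 := Subtype.ext hn
    rw [e1, map_add, e2, e3]
    simp [e4]
  -- correct `ψ` by a map into `ker f'`
  let d : m.domain →ₗ[F] LinearMap.ker f' :=
    (m.toFun - ψ ∘ₗ m.domain.subtype).codRestrict _ (fun x => by
      rw [LinearMap.mem_ker, LinearMap.sub_apply, map_sub, sub_eq_zero]
      exact (hmker x).trans (hψ x).symm)
  obtain ⟨D, hD⟩ := LinearMap.exists_extend d
  let g : A →ₗ[F] A' := ψ + (LinearMap.ker f').subtype ∘ₗ D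
  have hgm : ∀ x : m.domain, g x = m x := by
    intro x
    have h1 : ((D x : LinearMap.ker f') : A') = m x - ψ x :=
      congrArg Subtype.val (LinearMap.congr_fun hD x)
    change ψ x + D x = m x
    rw [h1]; abel
  have hgf : ∀ a, f' (g a) = h (f.rangeRestrict a) := by
    intro a
    have : f' (D a) = 0 := (D a).2
    change f' (ψ a + D a) = _
    rw [map_add, this, add_zero, hψ]
  have hgS : ∀ s : S, g s = e s := fun s =>
    (hgm ⟨s, hmp.1 s.2⟩).trans (hmp.2 (x := s) (y := ⟨s, hmp.1 s.2⟩) rfl).symm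
  have hgN : ∀ n : LinearMap.ker f, g n = k n := fun n =>
    (hgm ⟨n, hmq.1 n.2⟩).trans (hmq.2 (x := n) (y := ⟨n, hmq.1 n.2⟩) rfl).symm
  have hginj : Function.Injective g := by
    rw [← LinearMap.ker_eq_bot, LinearMap.ker_eq_bot']
    intro a ha
    have h1 := hgf a
    rw [ha, map_zero] at h1
    have h2 : f.rangeRestrict a = 0 := h.injective (by rw [map_zero]; exact Subtype.ext h1.symm)
    have h3 : a ∈ LinearMap.ker f := congrArg Subtype.val h2
    have h4 : k ⟨a, h3⟩ = 0 := Subtype.ext ((hgN ⟨a, h3⟩).symm.trans ha)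
    exact congrArg Subtype.val (hkinj (h4.trans (map_zero k).symm))
  have hdim : Module.finrank F A = Module.finrank F A' := by
    rw [← f.finrank_range_add_finrank_ker, ← f'.finrank_range_add_finrank_ker, hker, h.finrank_eq]
  exact ⟨LinearEquiv.ofInjectiveOfFinrankEq g hginj hdim, hgS, hgf⟩

/-! ### Powers of odd endomorphisms and restriction to the image -/

section
variable {F Vp Vm : Type*} [Field F] [AddCommGroup Vp] [Module F Vp]
  [AddCommGroup Vm] [Module F Vm] (X : Vp →ₗ[F] Vm) (Y : Vm →ₗ[F] Vp)

theorem oddEnd_pow_succ_inl (i : ℕ) : (oddEnd X Y ^ (i + 1)) ∘ₗ LinearMap.inl F Vp Vm =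
    ((oddEnd X Y ^ i) ∘ₗ LinearMap.inr F Vp Vm) ∘ₗ X := by
  ext v <;> simp [pow_succ, oddEnd]

theorem oddEnd_pow_succ_inr (i : ℕ) : (oddEnd X Y ^ (i + 1)) ∘ₗ LinearMap.inr F Vp Vm =
    ((oddEnd X Y ^ i) ∘ₗ LinearMap.inl F Vp Vm) ∘ₗ Y := by
  ext v <;> simp [pow_succ, oddEnd]

theorem ker_oddEnd_inl : LinearMap.ker ((oddEnd X Y ^ 1) ∘ₗ LinearMap.inl F Vp Vm) =
    LinearMap.ker X := by
  ext v; simp [oddEnd]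

theorem ker_oddEnd_inr : LinearMap.ker ((oddEnd X Y ^ 1) ∘ₗ LinearMap.inr F Vp Vm) =
    LinearMap.ker Y := by
  ext v; simp [oddEnd]

theorem finrank_ker_inf_plus (T : Module.End F (Vp × Vm)) :
    Module.finrank F (LinearMap.ker T ⊓
      Submodule.prod (⊤ : Submodule F Vp) (⊥ : Submodule F Vm) : Submodule F (Vp × Vm)) =
    Module.finrank F (LinearMap.ker (T ∘ₗ LinearMap.inl F Vp Vm)) := by
  have : (LinearMap.ker T ⊓ Submodule.prod (⊤ : Submodule F Vp) (⊥ : Submodule F Vm)) =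
      (LinearMap.ker (T ∘ₗ LinearMap.inl F Vp Vm)).map (LinearMap.inl F Vp Vm) := by
    rw [LinearMap.ker_comp, Submodule.map_comap_eq, inf_comm, ← Submodule.map_inl,
      Submodule.map_top]
  rw [this]
  exact (Submodule.equivMapOfInjective _ LinearMap.inl_injective _).finrank_eq.symm

theorem finrank_ker_inf_minus (T : Module.End F (Vp × Vm)) :
    Module.finrank F (LinearMap.ker T ⊓
      Submodule.prod (⊥ : Submodule F Vp) (⊤ : Submodule F Vm) : Submodule F (Vp × Vm)) =
    Module.finrank F (LinearMap.ker (T ∘ₗ LinearMap.inr F Vp Vm)) := by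
  have : (LinearMap.ker T ⊓ Submodule.prod (⊥ : Submodule F Vp) (⊤ : Submodule F Vm)) =
      (LinearMap.ker (T ∘ₗ LinearMap.inr F Vp Vm)).map (LinearMap.inr F Vp Vm) := by
    rw [LinearMap.ker_comp, Submodule.map_comap_eq, inf_comm, ← Submodule.map_inr,
      Submodule.map_top]
  rw [this]
  exact (Submodule.equivMapOfInjective _ LinearMap.inr_injective _).finrank_eq.symm

/-- The component `im Y → im X` of the restriction of `ξ` to its image `im Y × im X`. The other
component is `resRange Y X`. -/
def resRange : LinearMap.range Y →ₗ[F] LinearMap.range X :=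
  X.rangeRestrict ∘ₗ (LinearMap.range Y).subtype

/-- A graded map intertwining two odd endomorphisms intertwines all their powers. -/
theorem oddEnd_intertwine_pow {Wp Wm : Type*} [AddCommGroup Wp] [Module F Wp]
    [AddCommGroup Wm] [Module F Wm] {X : Vp →ₗ[F] Vm} {Y : Vm →ₗ[F] Vp}
    {X' : Wp →ₗ[F] Wm} {Y' : Wm →ₗ[F] Wp} (g : Vp →ₗ[F] Wp) (h : Vm →ₗ[F] Wm)
    (hX : ∀ v, X' (g v) = h (X v)) (hY : ∀ v, Y' (h v) = g (Y v)) (i : ℕ) (v : Vp × Vm) :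
    (oddEnd X' Y' ^ i) (g.prodMap h v) = g.prodMap h ((oddEnd X Y ^ i) v) := by
  induction i generalizing v with
  | zero => simp
  | succ i ih =>
    have : oddEnd X' Y' (g.prodMap h v) = g.prodMap h (oddEnd X Y v) := by
      simp [oddEnd, hX, hY]
    rw [pow_succ, pow_succ, Module.End.mul_apply, Module.End.mul_apply, this, ih]

theorem oddEnd_resRange_pow (i : ℕ) (v : LinearMap.range Y × LinearMap.range X) :
    (oddEnd X Y ^ i) ((v.1 : Vp), (v.2 : Vm)) =
      (((oddEnd (resRange X Y) (resRange Y X) ^ i) v).1.1,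
        ((oddEnd (resRange X Y) (resRange Y X) ^ i) v).2.1) :=
  oddEnd_intertwine_pow (X := resRange X Y) (Y := resRange Y X)
    (LinearMap.range Y).subtype (LinearMap.range X).subtype (fun _ => rfl) (fun _ => rfl) i v

/-- The even kernel dimensions of `ξ` determine the odd ones of its restriction to the image:
`X` maps `ker (ξ ^ (i + 1)) ∩ V⁺` onto `ker (ξ ^ i) ∩ im X`, with kernel `ker X`. -/
theorem finrank_ker_pow_succ_inl [FiniteDimensional F Vp] (i : ℕ) :
    Module.finrank F (LinearMap.ker ((oddEnd X Y ^ (i + 1)) ∘ₗ LinearMap.inl F Vp Vm)) =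
      Module.finrank F (LinearMap.ker X) + Module.finrank F (LinearMap.ker
        ((oddEnd (resRange X Y) (resRange Y X) ^ i) ∘ₗ LinearMap.inr F _ _)) := by
  rw [oddEnd_pow_succ_inl, finrank_ker_comp_eq]
  have : LinearMap.ker (((oddEnd X Y ^ i) ∘ₗ LinearMap.inr F Vp Vm) ∘ₗ
      (LinearMap.range X).subtype) = LinearMap.ker
        ((oddEnd (resRange X Y) (resRange Y X) ^ i) ∘ₗ LinearMap.inr F _ _) := by
    ext v
    have := oddEnd_resRange_pow X Y i (0, v)
    simp only [LinearMap.mem_ker, LinearMap.comp_apply, LinearMap.inr_apply,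
      Submodule.subtype_apply]
    rw [ZeroMemClass.coe_zero] at this
    rw [this]
    simp [Prod.ext_iff]
  rw [this]

theorem finrank_ker_pow_succ_inr [FiniteDimensional F Vm] (i : ℕ) :
    Module.finrank F (LinearMap.ker ((oddEnd X Y ^ (i + 1)) ∘ₗ LinearMap.inr F Vp Vm)) =
      Module.finrank F (LinearMap.ker Y) + Module.finrank F (LinearMap.ker
        ((oddEnd (resRange X Y) (resRange Y X) ^ i) ∘ₗ LinearMap.inl F _ _)) := by
  rw [oddEnd_pow_succ_inr, finrank_ker_comp_eq]
  have : LinearMap.ker (((oddEnd X Y ^ i) ∘ₗ LinearMap.inl F Vp Vm) ∘ₗ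
      (LinearMap.range Y).subtype) = LinearMap.ker
        ((oddEnd (resRange X Y) (resRange Y X) ^ i) ∘ₗ LinearMap.inl F _ _) := by
    ext v
    have := oddEnd_resRange_pow X Y i (v, 0)
    simp only [LinearMap.mem_ker, LinearMap.comp_apply, LinearMap.inl_apply,
      Submodule.subtype_apply]
    rw [ZeroMemClass.coe_zero] at this
    rw [this]
    simp [Prod.ext_iff]
  rw [this]

theorem oddEnd_resRange_pow_eq_zero {n : ℕ} (hn : oddEnd X Y ^ (n + 1) = 0) :
    oddEnd (resRange X Y) (resRange Y X) ^ n = 0 := by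
  refine LinearMap.ext fun v => ?_
  obtain ⟨⟨_, w, rfl⟩, ⟨_, u, rfl⟩⟩ := v
  have h1 := oddEnd_resRange_pow X Y n (⟨Y w, w, rfl⟩, ⟨X u, u, rfl⟩)
  have h2 : (oddEnd X Y ^ n) (Y w, X u) = 0 := by
    have := LinearMap.congr_fun hn (u, w)
    rwa [pow_succ, Module.End.mul_apply] at this
  rw [h2] at h1
  exact Prod.ext (Subtype.ext (congrArg Prod.fst h1).symm) (Subtype.ext (congrArg Prod.snd h1).symm)

end

/-! ### The classification -/

universe u v

/-- The hard direction, for pairs on possibly different spaces: equal graded kernel dimensions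
imply conjugacy. The induction on the nilpotency exponent passes to the images `im Y × im X` and
`im Y' × im X'`, hence the freedom in the spaces. -/
theorem exists_intertwining_equiv {F : Type*} [Field F] (n : ℕ) :
    ∀ {Vp Wp : Type u} {Vm Wm : Type v}
    [AddCommGroup Vp] [Module F Vp] [FiniteDimensional F Vp]
    [AddCommGroup Vm] [Module F Vm] [FiniteDimensional F Vm]
    [AddCommGroup Wp] [Module F Wp] [FiniteDimensional F Wp]
    [AddCommGroup Wm] [Module F Wm] [FiniteDimensional F Wm]
    (X : Vp →ₗ[F] Vm) (Y : Vm →ₗ[F] Vp) (X' : Wp →ₗ[F] Wm) (Y' : Wm →ₗ[F] Wp),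
    oddEnd X Y ^ n = 0 → oddEnd X' Y' ^ n = 0 →
    (∀ i, Module.finrank F (LinearMap.ker ((oddEnd X Y ^ i) ∘ₗ LinearMap.inl F Vp Vm)) =
      Module.finrank F (LinearMap.ker ((oddEnd X' Y' ^ i) ∘ₗ LinearMap.inl F Wp Wm))) →
    (∀ i, Module.finrank F (LinearMap.ker ((oddEnd X Y ^ i) ∘ₗ LinearMap.inr F Vp Vm)) =
      Module.finrank F (LinearMap.ker ((oddEnd X' Y' ^ i) ∘ₗ LinearMap.inr F Wp Wm))) →
    ∃ (g : Vp ≃ₗ[F] Wp) (h : Vm ≃ₗ[F] Wm),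
      (∀ v, X' (g v) = h (X v)) ∧ ∀ v, Y' (h v) = g (Y v) := by
  induction n with
  | zero =>
    intro Vp Wp Vm Wm _ _ _ _ _ _ _ _ _ _ _ _ X Y X' Y' h0 h0' _ _
    -- `ξ ^ 0 = 0` says that `1 = 0`, so all spaces vanish
    have hV : ∀ v : Vp × Vm, v = 0 := fun v => LinearMap.congr_fun h0 v
    have hW : ∀ v : Wp × Wm, v = 0 := fun v => LinearMap.congr_fun h0' v
    have : Subsingleton Vp := subsingleton_of_forall_eq 0 fun v => congrArg Prod.fst (hV (v, 0))
    have : Subsingleton Vm := subsingleton_of_forall_eq 0 fun v => congrArg Prod.snd (hV (0, v))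
    have : Subsingleton Wp := subsingleton_of_forall_eq 0 fun v => congrArg Prod.fst (hW (v, 0))
    have : Subsingleton Wm := subsingleton_of_forall_eq 0 fun v => congrArg Prod.snd (hW (0, v))
    exact ⟨0, 0, fun _ => Subsingleton.elim _ _, fun _ => Subsingleton.elim _ _⟩
  | succ n ih =>
    intro Vp Wp Vm Wm _ _ _ _ _ _ _ _ _ _ _ _ X Y X' Y' hn hn' hp hm
    have hkX := hp 1
    have hkY := hm 1
    rw [ker_oddEnd_inl, ker_oddEnd_inl] at hkX
    rw [ker_oddEnd_inr, ker_oddEnd_inr] at hkY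
    obtain ⟨g, h, hg, hh⟩ := ih (resRange X Y) (resRange Y X) (resRange X' Y') (resRange Y' X')
      (oddEnd_resRange_pow_eq_zero X Y hn) (oddEnd_resRange_pow_eq_zero X' Y' hn')
      (fun i => by
        have := hm (i + 1)
        rw [finrank_ker_pow_succ_inr, finrank_ker_pow_succ_inr] at this
        omega)
      (fun i => by
        have := hp (i + 1)
        rw [finrank_ker_pow_succ_inl, finrank_ker_pow_succ_inl] at this
        omega)
    obtain ⟨G, hG, hGX⟩ := exists_equiv_extending_over X X' _ _ g h
      (fun s => congrArg Subtype.val (hg s)) hkX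
    obtain ⟨H, hH, hHY⟩ := exists_equiv_extending_over Y Y' _ _ h g
      (fun s => congrArg Subtype.val (hh s)) hkY
    exact ⟨G, H, fun v => (hGX v).trans (hH (X.rangeRestrict v)).symm,
      fun v => (hHY v).trans (hG (Y.rangeRestrict v)).symm⟩

/-- Classification of nilpotent orbits in the sliced representation: two nilpotent pairs
`(X, Y)` and `(X′, Y′)` are in the same `GL(V⁺) × GL(V⁻)`-orbit iff the graded kernel
dimensions of the associated odd endomorphisms agree. -/
theorem oddEnd_nilpotent_orbit_classification {F Vp Vm : Type*} [Field F]
    [AddCommGroup Vp] [Module F Vp] [FiniteDimensional F Vp]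
    [AddCommGroup Vm] [Module F Vm] [FiniteDimensional F Vm]
    (X X' : Vp →ₗ[F] Vm) (Y Y' : Vm →ₗ[F] Vp)
    (hnil : IsNilpotent (oddEnd X Y)) (hnil' : IsNilpotent (oddEnd X' Y')) :
    (∃ (g : Vp ≃ₗ[F] Vp) (h : Vm ≃ₗ[F] Vm),
        X' = h.toLinearMap ∘ₗ X ∘ₗ g.symm.toLinearMap ∧
        Y' = g.toLinearMap ∘ₗ Y ∘ₗ h.symm.toLinearMap) ↔
      (∀ i : ℕ,
        Module.finrank F (LinearMap.ker ((oddEnd X Y) ^ i) ⊓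
            Submodule.prod (⊤ : Submodule F Vp) (⊥ : Submodule F Vm) : Submodule F (Vp × Vm)) =
          Module.finrank F (LinearMap.ker ((oddEnd X' Y') ^ i) ⊓
            Submodule.prod (⊤ : Submodule F Vp) (⊥ : Submodule F Vm) : Submodule F (Vp × Vm)) ∧
        Module.finrank F (LinearMap.ker ((oddEnd X Y) ^ i) ⊓
            Submodule.prod (⊥ : Submodule F Vp) (⊤ : Submodule F Vm) : Submodule F (Vp × Vm)) =
          Module.finrank F (LinearMap.ker ((oddEnd X' Y') ^ i) ⊓
            Submodule.prod (⊥ : Submodule F Vp) (⊤ : Submodule F Vm) : Submodule F (Vp × Vm))) := by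
  constructor
  · rintro ⟨g, h, hX, hY⟩ i
    have hX' : ∀ v, X' (g v) = h (X v) := fun v => by simp [hX]
    have hY' : ∀ v, Y' (h v) = g (Y v) := fun v => by simp [hY]
    have hpow := oddEnd_intertwine_pow g.toLinearMap h.toLinearMap hX' hY' i
    have hinj : ∀ v, g.toLinearMap.prodMap h.toLinearMap v = 0 ↔ v = 0 := fun v => by
      simp [Prod.ext_iff]
    simp only [finrank_ker_inf_plus, finrank_ker_inf_minus]
    constructor
    · have hk : LinearMap.ker ((oddEnd X Y ^ i) ∘ₗ LinearMap.inl F Vp Vm) =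
          (LinearMap.ker ((oddEnd X' Y' ^ i) ∘ₗ LinearMap.inl F Vp Vm)).comap
            g.toLinearMap := by
        ext v
        have h1 := hpow (v, 0)
        rw [LinearMap.prodMap_apply, map_zero] at h1
        change (oddEnd X Y ^ i) (v, 0) = 0 ↔ (oddEnd X' Y' ^ i) (g.toLinearMap v, 0) = 0
        rw [h1, hinj]
      rw [hk]
      exact (g.ofSubmodule' _).finrank_eq
    · have hk : LinearMap.ker ((oddEnd X Y ^ i) ∘ₗ LinearMap.inr F Vp Vm) =
          (LinearMap.ker ((oddEnd X' Y' ^ i) ∘ₗ LinearMap.inr F Vp Vm)).comap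
            h.toLinearMap := by
        ext v
        have h1 := hpow (0, v)
        rw [LinearMap.prodMap_apply, map_zero] at h1
        change (oddEnd X Y ^ i) (0, v) = 0 ↔ (oddEnd X' Y' ^ i) (0, h.toLinearMap v) = 0
        rw [h1, hinj]
      rw [hk]
      exact (h.ofSubmodule' _).finrank_eq
  · intro H
    simp only [finrank_ker_inf_plus, finrank_ker_inf_minus] at H
    obtain ⟨n, hn⟩ := hnil
    obtain ⟨n', hn'⟩ := hnil'
    obtain ⟨g, h, hg, hh⟩ := exists_intertwining_equiv (n + n') X Y X' Y'
      (by rw [pow_add, hn, zero_mul]) (by rw [pow_add, hn', mul_zero])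
      (fun i => (H i).1) (fun i => (H i).2)
    refine ⟨g, h, LinearMap.ext fun v => ?_, LinearMap.ext fun v => ?_⟩
    · simpa using hg (g.symm v)
    · simpa using hh (h.symm v)
end

section
/- Let E/F be a Galois field extension of degree 2 with σ the nontrivial element of Gal(E/F), acting entrywise on matrices over E. Let α ∈ GL_n(E). Define V₁ = {A ∈ Mat_n(E) : α·σ(A) = A·σ(α)}, 𝔥₁ = {B ∈ Mat_n(E) : B·α = α·σ(B)}, and the twisted centralizer H₁ = {h ∈ GL_n(E) : h⁻¹·α·σ(h) = α}. Then the map A ↦ A·σ(α) is an F-linear bijection from V₁ onto 𝔥₁, and it intertwines the twisted conjugation action of H₁ on V₁ with the conjugation action of H₁ on 𝔥₁: for every h ∈ H₁ and A ∈ V₁, (h⁻¹·A·σ(h))·σ(α) = h⁻¹·(A·σ(α))·h. -/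
open Matrix

/-!
A Galois group of order `2` forces `σ² = 1`, so the entrywise action of `σ` is an involutive
ring endomorphism of the matrix algebra. For `B = A·σ(α)` one has `α·σ(B) = α·σ(A)·α`, so the
equation `α·σ(A) = A·σ(α)` defining `V₁` is, after cancelling the invertible `α` on the right,
the equation `α·σ(B) = B·α` defining `𝔥₁`. Bijectivity is invertibility of `σ(α)`, with inverse
map `B ↦ B·σ(α⁻¹)`. Applying `σ` to `α·σ(h) = h·α` gives `σ(α)·h = σ(h)·σ(α)`, which is the
intertwining relation.
-/

/-- The map `A ↦ A·σ(α)` is an `F`-linear bijection from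
`V₁ = {A : α·σ(A) = A·σ(α)}` onto `𝔥₁ = {B : B·α = α·σ(B)}`, intertwining the twisted
conjugation action of the twisted centralizer `H₁` on `V₁` with its conjugation action
on `𝔥₁`. -/
theorem twisted_slice_linear_bijection (F E : Type*) [Field F] [Field E] [Algebra F E]
    [IsGalois F E] (hdeg : Module.finrank F E = 2)
    (σ : E ≃ₐ[F] E) (hσ : σ ≠ 1)
    (n : ℕ) (α : Matrix (Fin n) (Fin n) E) (hα : IsUnit α)
    (V₁ : Set (Matrix (Fin n) (Fin n) E))
    (hV₁ : V₁ = {A | α * A.map σ = A * α.map σ})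
    (h₁ : Set (Matrix (Fin n) (Fin n) E))
    (hh₁ : h₁ = {B | B * α = α * B.map σ})
    (H₁ : Set ((Matrix (Fin n) (Fin n) E)ˣ))
    (hH₁ : H₁ = {h : (Matrix (Fin n) (Fin n) E)ˣ | (↑h⁻¹ : Matrix (Fin n) (Fin n) E) * α *
        (↑h : Matrix (Fin n) (Fin n) E).map σ = α}) :
    ∃ f : Matrix (Fin n) (Fin n) E →ₗ[F] Matrix (Fin n) (Fin n) E,
      (∀ A, f A = A * α.map σ) ∧
      Set.BijOn f V₁ h₁ ∧
      ∀ h ∈ H₁, ∀ A ∈ V₁,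
        ((↑h⁻¹ : Matrix (Fin n) (Fin n) E) * A * (↑h : Matrix (Fin n) (Fin n) E).map σ) *
            α.map σ =
          (↑h⁻¹ : Matrix (Fin n) (Fin n) E) * (A * α.map σ) *
            (↑h : Matrix (Fin n) (Fin n) E) := by
  have hσσ : ∀ x, σ (σ x) = x := by
    have hcard : Nat.card (E ≃ₐ[F] E) = 2 := by
      haveI : FiniteDimensional F E := Module.finite_of_finrank_pos (by omega)
      rw [IsGalois.card_aut_eq_finrank, hdeg]
    have h2 : σ ^ 2 = 1 := by
      rw [← hcard]
      exact pow_card_eq_one'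
    intro x
    have := DFunLike.congr_fun h2 x
    simpa [pow_two] using this
  have hinv : ∀ A : Matrix (Fin n) (Fin n) E, (A.map σ).map σ = A := by
    intro A
    ext i j
    simp [hσσ]
  have hmul : ∀ A B : Matrix (Fin n) (Fin n) E, (A * B).map σ = A.map σ * B.map σ :=
    fun A B => Matrix.map_mul
  have hone : (1 : Matrix (Fin n) (Fin n) E).map σ = 1 :=
    Matrix.map_one σ (map_zero σ) (map_one σ)
  obtain ⟨a, rfl⟩ := hα
  have hs1 : (a : Matrix (Fin n) (Fin n) E).map σ *
      (↑a⁻¹ : Matrix (Fin n) (Fin n) E).map σ = 1 := by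
    rw [← hmul, Units.mul_inv, hone]
  have hs2 : (↑a⁻¹ : Matrix (Fin n) (Fin n) E).map σ *
      (a : Matrix (Fin n) (Fin n) E).map σ = 1 := by
    rw [← hmul, Units.inv_mul, hone]
  subst hV₁ hh₁ hH₁
  refine ⟨LinearMap.mulRight F ((a : Matrix (Fin n) (Fin n) E).map σ), fun A => rfl,
    ⟨?_, ?_, ?_⟩, ?_⟩
  · intro A hA
    simp only [Set.mem_setOf_eq, LinearMap.mulRight_apply] at hA ⊢
    rw [hmul, hinv, ← hA, Matrix.mul_assoc]
  · intro A _ B _ hAB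
    simp only [LinearMap.mulRight_apply] at hAB
    have := congrArg (· * (↑a⁻¹ : Matrix (Fin n) (Fin n) E).map σ) hAB
    simpa only [Matrix.mul_assoc, hs1, Matrix.mul_one] using this
  · intro B hB
    simp only [Set.mem_setOf_eq] at hB
    refine ⟨B * (↑a⁻¹ : Matrix (Fin n) (Fin n) E).map σ, ?_, ?_⟩
    · simp only [Set.mem_setOf_eq]
      rw [hmul, hinv, ← Matrix.mul_assoc, ← hB, Matrix.mul_assoc, Units.mul_inv,
        Matrix.mul_assoc, hs2]
    · simp only [LinearMap.mulRight_apply]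
      rw [Matrix.mul_assoc, hs2, Matrix.mul_one]
  · intro h hh A _
    simp only [Set.mem_setOf_eq] at hh
    have e1 : (a : Matrix (Fin n) (Fin n) E) * (h : Matrix (Fin n) (Fin n) E).map σ =
        (h : Matrix (Fin n) (Fin n) E) * a := by
      rw [Matrix.mul_assoc] at hh
      exact (Units.inv_mul_eq_iff_eq_mul h).mp hh
    have e2 := congrArg (fun M : Matrix (Fin n) (Fin n) E => M.map σ) e1
    simp only [hmul, hinv] at e2
    simp only [Matrix.mul_assoc, e2]
end

section
/- Let E/F be a Galois field extension of degree 2 with σ the nontrivial element of Gal(E/F), acting entrywise on matrices over E. Let α ∈ GL_n(E) satisfy α·σ(α) = σ(α)·α (equivalently, α·σ(α) is fixed entrywise by σ). Let s′(α) ∈ Mat_{2n}(E) be the block matrix with blocks (α, 1_n; 1_n − α·σ(α), −σ(α)). Then s′(α)·σ(s′(α)) = 1_{2n}; in particular s′(α) is invertible with inverse σ(s′(α)), so s′(α) lies in the symmetric space {s ∈ GL_{2n}(E) : s·σ(s) = 1}. -/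
open Matrix

/-!
Write `β = σ(α)`. Since `σ` is an involution, `σ(s′(α))` is the block matrix
`(β, 1; 1 - βα, -α)`, and multiplying blocks, the identity `s′(α)·σ(s′(α)) = 1` reduces to
`αβ = βα`. For square matrices over a field a right inverse is also a left inverse.
-/

/-- For `α ∈ GL_n(E)` with `α·σ(α) = σ(α)·α`, the block matrix
`s′(α) = (α, 1; 1 − α·σ(α), −σ(α))` satisfies `s′(α)·σ(s′(α)) = 1`; in particular it is
invertible with inverse `σ(s′(α))`, so it lies in the symmetric space
`{s ∈ GL_{2n}(E) : s·σ(s) = 1}`. -/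
theorem sPrime_mul_conj_eq_one (F E : Type*) [Field F] [Field E] [Algebra F E]
    [IsGalois F E] (hdeg : Module.finrank F E = 2)
    (σ : E ≃ₐ[F] E) (hσ : σ ≠ 1)
    (n : ℕ) (α : Matrix (Fin n) (Fin n) E) (hα : IsUnit α)
    (hcomm : α * α.map σ = α.map σ * α)
    (s : Matrix (Fin n ⊕ Fin n) (Fin n ⊕ Fin n) E)
    (hs : s = Matrix.fromBlocks α 1 (1 - α * α.map σ) (-(α.map σ))) :
    s * s.map σ = 1 ∧ IsUnit s ∧ s.map σ * s = 1 := by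
  have : FiniteDimensional F E := Module.finite_of_finrank_pos (by omega)
  -- The Galois group has order 2, so `σ` is an involution.
  have hσ2 : σ ^ 2 = 1 := by
    rw [← hdeg, ← IsGalois.card_aut_eq_finrank F E]
    exact pow_card_eq_one'
  have hinv : ∀ x, σ (σ x) = x := fun x => by
    have h := DFunLike.congr_fun hσ2 x
    rwa [pow_two] at h
  have hmap2 : (α.map σ).map σ = α := by
    ext i j
    simp [hinv]
  -- In terms of blocks, `σ(s)` is `s` with `α` and `σ(α)` interchanged.
  have hsσ : s.map σ = Matrix.fromBlocks (α.map σ) 1 (1 - α.map σ * α) (-α) := by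
    have h1 : (1 : Matrix (Fin n) (Fin n) E).map σ = 1 :=
      Matrix.map_one σ (map_zero σ) (map_one σ)
    have h2 : (1 - α * α.map σ).map σ = 1 - α.map σ * α := by
      rw [Matrix.map_sub σ (map_sub σ), h1, Matrix.map_mul, hmap2]
    have h3 : (-(α.map σ)).map σ = -α := by
      ext i j
      simp [hinv]
    rw [hs, Matrix.fromBlocks_map, h1, h2, h3]
  have hmul : s * s.map σ = 1 := by
    rw [hsσ, hs, Matrix.fromBlocks_multiply, ← Matrix.fromBlocks_one]
    generalize α.map σ = β at hcomm
    congr 1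
    · rw [one_mul, hcomm]
      abel
    · simp
    · rw [hcomm]
      noncomm_ring
      rw [hcomm]
      simp
    · rw [hcomm]
      noncomm_ring
  have hmul' : s.map σ * s = 1 := mul_eq_one_comm.mp hmul
  exact ⟨hmul, ⟨⟨s, s.map σ, hmul, hmul'⟩, rfl⟩, hmul'⟩
end

section
/- Let E/F be a Galois field extension of degree 2 with σ the nontrivial element of Gal(E/F), acting entrywise on matrices over E. For j = 1, 2 let α_j ∈ GL_n(E) be such that α_j·σ(α_j) is fixed entrywise by σ, the characteristic polynomial of α_j·σ(α_j) is squarefree, and det(α_j·σ(α_j) − 1) ≠ 0; let s′(α_j) ∈ GL_{2n}(E) be the block matrix with blocks (α_j, 1_n; 1_n − α_j·σ(α_j), −σ(α_j)). Then there exist h₁, h₂ ∈ GL_n(E) such that diag(h₁, h₂)·s′(α₁)·σ(diag(h₁, h₂))⁻¹ = s′(α₂) if and only if α₁ and α₂ are σ-twisted conjugate in GL_n(E), i.e., there exists h ∈ GL_n(E) with α₂ = h·α₁·σ(h)⁻¹. -/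
open Matrix

/-!
The top left block of `diag(h₁, h₂) s′(α₁) = s′(α₂) σ(diag(h₁, h₂))` says `h₁ α₁ = α₂ σ(h₁)`, so an
orbit relation gives a twisted conjugacy. Conversely, if `h α₁ = α₂ σ(h)`, then `diag(h, σ(h))`
works: as `σ` is an involution, the top right block is trivial and the bottom right block is `σ` of
the hypothesis. For the bottom left block, `h α₁σ(α₁) = α₂σ(α₂) h`; applying `σ` and using that both
norms `αⱼσ(αⱼ)` are fixed by `σ` gives `σ(h) α₁σ(α₁) = α₂σ(α₂) σ(h)`.
-/

/-- Two regular semisimple elements `s′(α₁)` and `s′(α₂)` of the symmetric space `S′` are in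
the same `H′ = GL_n(E) × GL_n(E)`-orbit (acting by twisted conjugation
`diag(h₁,h₂)·s·σ(diag(h₁,h₂))⁻¹`) iff `α₁` and `α₂` are `σ`-twisted conjugate in `GL_n(E)`. -/
theorem sPrime_orbit_iff_twisted_conjugate (F E : Type*) [Field F] [Field E] [Algebra F E]
    [IsGalois F E] (hdeg : Module.finrank F E = 2)
    (σ : E ≃ₐ[F] E) (hσ : σ ≠ 1)
    (n : ℕ) (α₁ α₂ : Matrix (Fin n) (Fin n) E)
    (hα₁ : IsUnit α₁) (hα₂ : IsUnit α₂)
    (hfix₁ : (α₁ * α₁.map σ).map σ = α₁ * α₁.map σ)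
    (hfix₂ : (α₂ * α₂.map σ).map σ = α₂ * α₂.map σ)
    (hsq₁ : Squarefree (α₁ * α₁.map σ).charpoly)
    (hsq₂ : Squarefree (α₂ * α₂.map σ).charpoly)
    (hdet₁ : (α₁ * α₁.map σ - 1).det ≠ 0)
    (hdet₂ : (α₂ * α₂.map σ - 1).det ≠ 0)
    (s₁ s₂ : Matrix (Fin n ⊕ Fin n) (Fin n ⊕ Fin n) E)
    (hs₁ : s₁ = Matrix.fromBlocks α₁ 1 (1 - α₁ * α₁.map σ) (-(α₁.map σ)))
    (hs₂ : s₂ = Matrix.fromBlocks α₂ 1 (1 - α₂ * α₂.map σ) (-(α₂.map σ))) :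
    (∃ h₁ h₂ : Matrix (Fin n) (Fin n) E, IsUnit h₁ ∧ IsUnit h₂ ∧
        Matrix.fromBlocks h₁ 0 0 h₂ * s₁ * ((Matrix.fromBlocks h₁ 0 0 h₂).map σ)⁻¹ = s₂) ↔
      (∃ h : Matrix (Fin n) (Fin n) E, IsUnit h ∧ α₂ = h * α₁ * (h.map σ)⁻¹) := by
  -- `σ` is an involution because the Galois group has order two.
  have hσσ : ∀ x, σ (σ x) = x := by
    have : FiniteDimensional F E := Module.finite_of_finrank_pos (by omega)
    have hcard : Nat.card (E ≃ₐ[F] E) = 2 := by rw [← hdeg]; exact IsGalois.card_aut_eq_finrank F E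
    have h2 : σ ^ 2 = 1 := by rw [← hcard]; exact pow_card_eq_one'
    intro x
    have := DFunLike.congr_fun h2 x
    simpa [pow_two] using this
  have hmul {m : Type _} [Fintype m] (A B : Matrix m m E) :
      (A * B).map σ = A.map σ * B.map σ := Matrix.map_mul
  have hinv {m : Type _} (A : Matrix m m E) : (A.map σ).map σ = A := by
    ext i j; simp [hσσ]
  have hunit {m : Type _} [Fintype m] [DecidableEq m] {A : Matrix m m E} (hA : IsUnit A) :
      IsUnit (A.map σ) := hA.map (σ : E →+* E).mapMatrix
  -- Clearing the inverse in the twisted conjugation action.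
  have hclear {m : Type _} [Fintype m] [DecidableEq m] {A B C : Matrix m m E} (hC : IsUnit C) :
      A * C⁻¹ = B ↔ A = B * C := by
    have hdet := (Matrix.isUnit_iff_isUnit_det C).1 hC
    constructor
    · rintro rfl
      rw [Matrix.nonsing_inv_mul_cancel_right _ _ hdet]
    · rintro rfl
      rw [Matrix.mul_nonsing_inv_cancel_right _ _ hdet]
  have hblock {h₁ h₂ : Matrix (Fin n) (Fin n) E} (u₁ : IsUnit h₁) (u₂ : IsUnit h₂) :
      IsUnit (Matrix.fromBlocks h₁ 0 0 h₂) := by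
    rw [Matrix.isUnit_iff_isUnit_det] at *
    rw [Matrix.det_fromBlocks_zero₂₁]
    exact u₁.mul u₂
  subst hs₁ hs₂
  constructor
  · rintro ⟨h₁, h₂, u₁, u₂, H⟩
    rw [hclear (hunit (hblock u₁ u₂)), Matrix.fromBlocks_map, Matrix.fromBlocks_multiply,
      Matrix.fromBlocks_multiply, Matrix.fromBlocks_inj] at H
    refine ⟨h₁, u₁, ((hclear (hunit u₁)).2 ?_).symm⟩
    simpa using H.1
  · rintro ⟨h, u, H⟩
    have H := (hclear (hunit u)).1 H.symm
    have H' : h.map σ * α₁.map σ = α₂.map σ * h := by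
      rw [← hmul, H, hmul, hinv]
    have hN : h * (α₁ * α₁.map σ) = α₂ * α₂.map σ * h := by
      rw [← mul_assoc, H, mul_assoc, H', mul_assoc]
    have hN' : h.map σ * (α₁ * α₁.map σ) = α₂ * α₂.map σ * h.map σ := by
      have := congrArg (fun A => A.map σ) hN
      simp only [hmul h, hmul _ h] at this
      rwa [hfix₁, hfix₂] at this
    refine ⟨h, h.map σ, u, hunit u, (hclear (hunit (hblock u (hunit u)))).2 ?_⟩
    rw [Matrix.fromBlocks_map, Matrix.fromBlocks_multiply, Matrix.fromBlocks_multiply,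
      Matrix.fromBlocks_inj, hinv]
    have h0 : (0 : Matrix (Fin n) (Fin n) E).map σ = 0 := Matrix.map_zero _ (map_zero σ)
    simp [h0, H, H', mul_sub, sub_mul, hN']
end
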